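/- arXiv:2005.00772 — 2 statements merged into one kernel-verified Lean document; each statement's English description precedes it below -/
import Mathlib

section
/- For all natural numbers n and λ, ∑_{k=0}^{n} (−1)^k · binom(n,k) · n(1+2λ)(1+2n+2λ) · binom(2λ, λ)² / ((1+2k+2λ) · binom(2k+2λ, k+λ) · binom(2n−2k+2λ, n−k+λ)) equals (1+2λ) · binom(2λ, λ)² · binom(n, ⌊n/2⌋) / (binom(λ+n, n) · binom(2λ+2n, λ+n) · binom(2λ+n, λ+⌊n/2⌋)) multiplied by n when n is even, and by n+1 when n is odd, as an equality of rational numbers. -/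
/-!
Write `F x = ₁F₁(a; b + 1; x)`, `G x = ₁F₁(a; b; x)` and `θ = x d/dx`. Contiguity gives the
first-order system `θ F = b (G - F)`, `b θ G = x (b G + (a - b) F)`, hence one for the products
`F(-x) G(x)`, `F(-x) F(x)` and `G(-x) G(x)`. The last two are even, so their odd coefficients vanish
and the system collapses to a two-term recurrence for the coefficients of `F(-x) G(x)`, which are
therefore quotients of rising factorials. Up to a factor depending only on `n`, the sum in the
theorem is the coefficient of `x ^ n` in `F(-x) G(x)` at `a = λ + 1`, `b = λ + 1 / 2`.
-/

section EulerDerivation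

open PowerSeries

/-- The Euler derivation `θ = x d/dx` on formal power series, which multiplies the coefficient of
`x ^ n` by `n`. -/
noncomputable def eulerDerivation (R : Type*) [CommSemiring R] : Derivation R R⟦X⟧ R⟦X⟧ :=
  (X : R⟦X⟧) • derivative R

theorem coeff_eulerDerivation {R : Type*} [CommSemiring R] (f : R⟦X⟧) (n : ℕ) :
    coeff n (eulerDerivation R f) = n * coeff n f := by
  cases n with
  | zero => simp [eulerDerivation]
  | succ n => simp [eulerDerivation, coeff_succ_X_mul, coeff_derivative, mul_comm]

variable {R : Type*} [CommRing R]

theorem coeff_evalNegHom (f : R⟦X⟧) (n : ℕ) : coeff n (evalNegHom f) = (-1) ^ n * coeff n f :=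
  coeff_rescale f (-1) n

theorem evalNegHom_evalNegHom (f : R⟦X⟧) : evalNegHom (evalNegHom f) = f := by
  simp [evalNegHom, rescale_rescale]

theorem evalNegHom_C (r : R) : evalNegHom (C r) = C r := by
  ext n
  rcases eq_or_ne n 0 with rfl | hn <;> simp [coeff_evalNegHom, coeff_C, *]

theorem evalNegHom_eulerDerivation (f : R⟦X⟧) :
    evalNegHom (eulerDerivation R f) = eulerDerivation R (evalNegHom f) := by
  ext n
  simp only [coeff_evalNegHom, coeff_eulerDerivation, mul_left_comm]

theorem coeff_eq_zero_of_odd_of_evalNegHom_eq_self [IsAddTorsionFree R] {f : R⟦X⟧}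
    (hf : evalNegHom f = f) {n : ℕ} (hn : Odd n) : coeff n f = 0 := by
  have h := coeff_evalNegHom f n
  rw [hf, hn.neg_one_pow, neg_one_mul] at h
  exact self_eq_neg.mp h

/-- The product `f(-x) f(x)`, an even power series. -/
noncomputable def evenProduct (f : R⟦X⟧) : R⟦X⟧ := evalNegHom f * f

theorem coeff_evenProduct_of_odd [IsAddTorsionFree R] (f : R⟦X⟧) {n : ℕ} (hn : Odd n) :
    coeff n (evenProduct f) = 0 :=
  coeff_eq_zero_of_odd_of_evalNegHom_eq_self
    (by rw [evenProduct, map_mul, evalNegHom_evalNegHom, mul_comm]) hn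

end EulerDerivation

section KummerSeries

open PowerSeries
open scoped Nat

variable {K : Type*} [Field K]

/-- Kummer's confluent hypergeometric series `₁F₁(a; b; x)`. A coefficient whose denominator
vanishes is `0` by the convention `x / 0 = 0`. -/
noncomputable def kummerSeries (a b : K) : K⟦X⟧ :=
  mk fun n => (ascPochhammer K n).eval a / ((ascPochhammer K n).eval b * n !)

theorem ascPochhammer_eval_ne_zero {b : K} (hb : ∀ k : ℕ, b + k ≠ 0) (n : ℕ) :
    (ascPochhammer K n).eval b ≠ 0 := by
  rw [Ne, ascPochhammer_eval_eq_zero_iff]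
  rintro ⟨k, -, hk⟩
  exact hb k (by rw [hk, add_neg_cancel])

theorem add_one_add_natCast_ne_zero {b : K} (hb : ∀ k : ℕ, b + k ≠ 0) (k : ℕ) :
    b + 1 + k ≠ 0 := by
  simpa [add_assoc, add_comm, add_left_comm] using hb (k + 1)

theorem ascPochhammer_eval_add_one {b : K} (hb : b ≠ 0) (n : ℕ) :
    (ascPochhammer K n).eval (b + 1) = (ascPochhammer K n).eval b * (b + n) / b := by
  rw [eq_div_iff hb, ← ascPochhammer_succ_eval, ascPochhammer_succ_left]
  simp [mul_comm]

variable {a b : K}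

theorem coeff_kummerSeries_add_one (hb : ∀ k : ℕ, b + k ≠ 0) (n : ℕ) :
    (b + n) * coeff n (kummerSeries a (b + 1)) = b * coeff n (kummerSeries a b) := by
  have hb0 : b ≠ 0 := by simpa using hb 0
  have hbn := hb n
  simp only [kummerSeries, coeff_mk, ascPochhammer_eval_add_one hb0]
  field_simp

theorem coeff_succ_kummerSeries [CharZero K] (hb : ∀ k : ℕ, b + k ≠ 0) (n : ℕ) :
    (n + 1) * (b + n) * coeff (n + 1) (kummerSeries a b) =
      (a + n) * coeff n (kummerSeries a b) := by
  have hbn := hb n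
  have hn : (n + 1 : K) ≠ 0 := n.cast_add_one_ne_zero
  simp only [kummerSeries, coeff_mk, ascPochhammer_succ_eval, Nat.factorial_succ, Nat.cast_mul,
    Nat.cast_add_one]
  field_simp

theorem eulerDerivation_kummerSeries_add_one (hb : ∀ k : ℕ, b + k ≠ 0) :
    eulerDerivation K (kummerSeries a (b + 1)) =
      C b * (kummerSeries a b - kummerSeries a (b + 1)) := by
  ext n
  rw [coeff_eulerDerivation, coeff_C_mul, map_sub]
  linear_combination coeff_kummerSeries_add_one (a := a) hb n

theorem eulerDerivation_kummerSeries [CharZero K] (hb : ∀ k : ℕ, b + k ≠ 0) :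
    C b * eulerDerivation K (kummerSeries a b) =
      X * (C b * kummerSeries a b + C (a - b) * kummerSeries a (b + 1)) := by
  ext n
  rw [coeff_C_mul, coeff_eulerDerivation]
  cases n with
  | zero => simp
  | succ n =>
    rw [coeff_succ_X_mul, map_add, coeff_C_mul, coeff_C_mul]
    apply mul_left_cancel₀ (hb n)
    push_cast
    linear_combination b * coeff_succ_kummerSeries (a := a) hb n
      - (a - b) * coeff_kummerSeries_add_one (a := a) hb n

theorem eulerDerivation_evalNegHom_kummerSeries_add_one (hb : ∀ k : ℕ, b + k ≠ 0) :
    eulerDerivation K (evalNegHom (kummerSeries a (b + 1))) =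
      C b * (evalNegHom (kummerSeries a b) - evalNegHom (kummerSeries a (b + 1))) := by
  rw [← evalNegHom_eulerDerivation, eulerDerivation_kummerSeries_add_one hb, map_mul, map_sub,
    evalNegHom_C]

theorem eulerDerivation_evalNegHom_kummerSeries [CharZero K] (hb : ∀ k : ℕ, b + k ≠ 0) :
    C b * eulerDerivation K (evalNegHom (kummerSeries a b)) =
      -X * (C b * evalNegHom (kummerSeries a b)
        + C (a - b) * evalNegHom (kummerSeries a (b + 1))) := by
  simpa only [map_mul, map_add, evalNegHom_C, evalNegHom_X, evalNegHom_eulerDerivation] using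
    congrArg evalNegHom (eulerDerivation_kummerSeries (a := a) hb)

/-- The product `₁F₁(a; b + 1; -x) ₁F₁(a; b; x)` of contiguous Kummer series. -/
noncomputable def contiguousProduct (a b : K) : K⟦X⟧ :=
  evalNegHom (kummerSeries a (b + 1)) * kummerSeries a b

theorem evalNegHom_contiguousProduct (a b : K) :
    evalNegHom (contiguousProduct a b) =
      kummerSeries a (b + 1) * evalNegHom (kummerSeries a b) := by
  rw [contiguousProduct, map_mul, evalNegHom_evalNegHom]

theorem eulerDerivation_evenProduct_kummerSeries_add_one (hb : ∀ k : ℕ, b + k ≠ 0) :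
    eulerDerivation K (evenProduct (kummerSeries a (b + 1))) =
      C b * (contiguousProduct a b + evalNegHom (contiguousProduct a b)
        - 2 * evenProduct (kummerSeries a (b + 1))) := by
  rw [evalNegHom_contiguousProduct]
  simp only [evenProduct, contiguousProduct, Derivation.leibniz, smul_eq_mul,
    eulerDerivation_kummerSeries_add_one hb, eulerDerivation_evalNegHom_kummerSeries_add_one hb]
  ring

theorem eulerDerivation_evenProduct_kummerSeries [CharZero K] (hb : ∀ k : ℕ, b + k ≠ 0) :
    C b * eulerDerivation K (evenProduct (kummerSeries a b)) =
      C (a - b) * (X * (evalNegHom (contiguousProduct a b) - contiguousProduct a b)) := by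
  rw [evalNegHom_contiguousProduct]
  simp only [evenProduct, contiguousProduct, Derivation.leibniz, smul_eq_mul]
  linear_combination evalNegHom (kummerSeries a b) * eulerDerivation_kummerSeries (a := a) hb
    + kummerSeries a b * eulerDerivation_evalNegHom_kummerSeries (a := a) hb

theorem eulerDerivation_contiguousProduct [CharZero K] (hb : ∀ k : ℕ, b + k ≠ 0) :
    C b * eulerDerivation K (contiguousProduct a b) =
      C (b ^ 2) * (evenProduct (kummerSeries a b) - contiguousProduct a b)
        + X * (C b * contiguousProduct a b
          + C (a - b) * evenProduct (kummerSeries a (b + 1))) := by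
  simp only [evenProduct, contiguousProduct, Derivation.leibniz, smul_eq_mul, map_pow]
  linear_combination
    evalNegHom (kummerSeries a (b + 1)) * eulerDerivation_kummerSeries (a := a) hb
    + C b * kummerSeries a b * eulerDerivation_evalNegHom_kummerSeries_add_one (a := a) hb

theorem coeff_succ_contiguousProduct [CharZero K] (hb : ∀ k : ℕ, b + k ≠ 0) (n : ℕ) :
    b * (b + (n + 1)) * coeff (n + 1) (contiguousProduct a b) =
      b ^ 2 * coeff (n + 1) (evenProduct (kummerSeries a b))
        + (b * coeff n (contiguousProduct a b)
          + (a - b) * coeff n (evenProduct (kummerSeries a (b + 1)))) := by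
  have h := congrArg (coeff (n + 1)) (eulerDerivation_contiguousProduct (a := a) hb)
  simp only [map_add, map_sub, sub_mul, coeff_C_mul, coeff_succ_X_mul, coeff_eulerDerivation,
    Nat.cast_add_one] at h
  linear_combination h

theorem coeff_two_mul_add_one_contiguousProduct_eq_mul [CharZero K]
    (hb : ∀ k : ℕ, b + k ≠ 0) (m : ℕ) :
    coeff (2 * m + 1) (contiguousProduct a b) =
      (a + m) / ((b + m) * (b + 1 + (2 * m : ℕ))) * coeff (2 * m) (contiguousProduct a b) := by
  have hb0 : b ≠ 0 := by simpa using hb 0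
  have hEven :=
    congrArg (coeff (2 * m)) (eulerDerivation_evenProduct_kummerSeries_add_one (a := a) hb)
  have hSucc := coeff_succ_contiguousProduct (a := a) hb (2 * m)
  rw [coeff_evenProduct_of_odd _ (odd_two_mul_add_one m)] at hSucc
  rw [two_mul (evenProduct _)] at hEven
  simp only [map_add, map_sub, coeff_C_mul, coeff_eulerDerivation, coeff_evalNegHom,
    (even_two_mul m).neg_one_pow] at hEven
  rw [div_mul_eq_mul_div,
    eq_div_iff (mul_ne_zero (hb m) (add_one_add_natCast_ne_zero hb (2 * m)))]
  apply mul_left_cancel₀ hb0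
  push_cast at hEven hSucc ⊢
  linear_combination (b + m) * hSucc + (a - b) / 2 * hEven

theorem coeff_two_mul_add_two_contiguousProduct_eq_mul [CharZero K]
    (hb : ∀ k : ℕ, b + k ≠ 0) (m : ℕ) :
    coeff (2 * m + 2) (contiguousProduct a b) =
      (b + 1 - a + m) / ((m + 1) * (b + 1 + (2 * m + 1 : ℕ))) *
        coeff (2 * m + 1) (contiguousProduct a b) := by
  have hb0 : b ≠ 0 := by simpa using hb 0
  have hEven := congrArg (coeff (2 * m + 2)) (eulerDerivation_evenProduct_kummerSeries (a := a) hb)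
  have hSucc := coeff_succ_contiguousProduct (a := a) hb (2 * m + 1)
  rw [coeff_evenProduct_of_odd _ (odd_two_mul_add_one m)] at hSucc
  simp only [map_sub, sub_mul, coeff_C_mul, coeff_succ_X_mul, coeff_eulerDerivation,
    coeff_evalNegHom, (odd_two_mul_add_one m).neg_one_pow] at hEven
  rw [div_mul_eq_mul_div, eq_div_iff
    (mul_ne_zero m.cast_add_one_ne_zero (add_one_add_natCast_ne_zero hb (2 * m + 1)))]
  apply mul_left_cancel₀ hb0
  push_cast at hEven hSucc ⊢
  linear_combination (m + 1) * hSucc + 1 / 2 * b * hEven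

theorem coeff_two_mul_contiguousProduct [CharZero K] (hb : ∀ k : ℕ, b + k ≠ 0) (m : ℕ) :
    coeff (2 * m) (contiguousProduct a b) =
      (ascPochhammer K m).eval a * (ascPochhammer K m).eval (b + 1 - a) /
        (m ! * (ascPochhammer K m).eval b * (ascPochhammer K (2 * m)).eval (b + 1)) := by
  induction m with
  | zero => simp [contiguousProduct, kummerSeries, evalNegHom, rescale_mk]
  | succ m ih =>
    rw [mul_add_one, coeff_two_mul_add_two_contiguousProduct_eq_mul hb,
      coeff_two_mul_add_one_contiguousProduct_eq_mul hb, ih, div_mul_div_comm, div_mul_div_comm]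
    simp only [ascPochhammer_succ_eval, Nat.factorial_succ, Nat.cast_mul, Nat.cast_add_one]
    congr 1 <;> ring

theorem coeff_two_mul_add_one_contiguousProduct [CharZero K] (hb : ∀ k : ℕ, b + k ≠ 0) (m : ℕ) :
    coeff (2 * m + 1) (contiguousProduct a b) =
      (ascPochhammer K (m + 1)).eval a * (ascPochhammer K m).eval (b + 1 - a) /
        (m ! * (ascPochhammer K (m + 1)).eval b *
          (ascPochhammer K (2 * m + 1)).eval (b + 1)) := by
  rw [coeff_two_mul_add_one_contiguousProduct_eq_mul hb, coeff_two_mul_contiguousProduct hb,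
    div_mul_div_comm]
  simp only [ascPochhammer_succ_eval]
  congr 1 <;> ring

end KummerSeries

section CentralBinomial

open PowerSeries
open scoped Nat

theorem two_mul_choose_two_mul_add_one (m : ℕ) :
    2 * (2 * m + 1).choose m = (m + 1).centralBinom := by
  rw [Nat.centralBinom_eq_two_mul_choose, mul_add_one, Nat.choose_succ_succ',
    Nat.choose_symm_half, two_mul]

variable {K : Type*} [Field K] [CharZero K]

theorem natCast_add_half_add_natCast_ne_zero (l k : ℕ) : (l + 1 / 2 : K) + k ≠ 0 := by
  have h : (2 * (l + k) + 1 : K) ≠ 0 := by exact_mod_cast (2 * (l + k)).succ_ne_zero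
  contrapose! h
  linear_combination 2 * h

theorem ascPochhammer_eval_natCast_add_half (l n : ℕ) :
    (ascPochhammer K n).eval (l + 1 / 2 : K) =
      (ascPochhammer K n).eval (l + 1 : K) * (l + n).centralBinom / (4 ^ n * l.centralBinom) := by
  have hl : (l.centralBinom : K) ≠ 0 := by exact_mod_cast l.centralBinom_ne_zero
  induction n with
  | zero => simp [hl]
  | succ n ih =>
    have hRec : ((l + n + 1 : ℕ) * (l + n + 1).centralBinom : K) =
        2 * (2 * (l + n : ℕ) + 1) * (l + n).centralBinom := by
      exact_mod_cast Nat.succ_mul_centralBinom_succ (l + n)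
    rw [ascPochhammer_succ_eval, ascPochhammer_succ_eval, ih, ← add_assoc, pow_succ]
    push_cast at hRec
    field_simp
    linear_combination (-2 * (ascPochhammer K n).eval (l + 1 : K)) * hRec

theorem ascPochhammer_eval_natCast_add_one (l n : ℕ) :
    (ascPochhammer K n).eval (l + 1 : K) = n ! * (l + n).choose n := by
  have h := ascPochhammer_nat_eq_natCast_ascFactorial K (l + 1) n
  rw [Nat.ascFactorial_eq_factorial_mul_choose] at h
  exact_mod_cast h

theorem ascPochhammer_eval_half (m : ℕ) :
    (ascPochhammer K m).eval (1 / 2 : K) = m ! * m.centralBinom / 4 ^ m := by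
  simpa [ascPochhammer_eval_natCast_add_one] using ascPochhammer_eval_natCast_add_half (K := K) 0 m

theorem ascPochhammer_eval_natCast_add_half_add_one (l n : ℕ) :
    (ascPochhammer K n).eval (l + 1 / 2 + 1 : K) =
      (2 * (l + n) + 1) * n ! * (l + n).choose n * (l + n).centralBinom /
        (4 ^ n * (2 * l + 1) * l.centralBinom) := by
  have hb : (l + 1 / 2 : K) ≠ 0 := by
    simpa using natCast_add_half_add_natCast_ne_zero (K := K) l 0
  rw [ascPochhammer_eval_add_one hb, ascPochhammer_eval_natCast_add_half,
    ascPochhammer_eval_natCast_add_one]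
  field_simp
  ring

theorem ascPochhammer_eval_add_one_div_eval_add_half (l n : ℕ) :
    (ascPochhammer K n).eval (l + 1 : K) / (ascPochhammer K n).eval (l + 1 / 2 : K) =
      4 ^ n * l.centralBinom / (l + n).centralBinom := by
  have hAsc : (ascPochhammer K n).eval (l + 1 : K) ≠ 0 :=
    ascPochhammer_eval_ne_zero (fun k => by norm_cast; omega) n
  rw [ascPochhammer_eval_natCast_add_half]
  field_simp

theorem coeff_kummerSeries_add_half (l n : ℕ) :
    coeff n (kummerSeries (l + 1 : K) (l + 1 / 2)) =
      4 ^ n * l.centralBinom / ((l + n).centralBinom * n !) := by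
  rw [kummerSeries, coeff_mk, ← div_div, ascPochhammer_eval_add_one_div_eval_add_half, div_div]

theorem coeff_kummerSeries_add_half_add_one (l n : ℕ) :
    coeff n (kummerSeries (l + 1 : K) (l + 1 / 2 + 1)) =
      4 ^ n * (2 * l + 1) * l.centralBinom /
        ((2 * (l + n) + 1) * (l + n).centralBinom * n !) := by
  have hb := natCast_add_half_add_natCast_ne_zero (K := K) l
  have hne : (2 * (l + n) + 1 : K) ≠ 0 := by norm_cast
  have hContig := coeff_kummerSeries_add_one (a := (l + 1 : K)) hb n
  rw [coeff_kummerSeries_add_half] at hContig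
  apply mul_left_cancel₀ (hb n)
  rw [hContig]
  field_simp
  ring

theorem coeff_two_mul_contiguousProduct_add_half (l m : ℕ) :
    coeff (2 * m) (contiguousProduct (l + 1 : K) (l + 1 / 2)) =
      m.centralBinom * l.centralBinom /
        ((l + m).centralBinom * (ascPochhammer K (2 * m)).eval (l + 1 / 2 + 1 : K)) := by
  have hm : (m ! : K) ≠ 0 := by exact_mod_cast m.factorial_ne_zero
  rw [coeff_two_mul_contiguousProduct (natCast_add_half_add_natCast_ne_zero l),
    show (l + 1 / 2 + 1 - (l + 1) : K) = 1 / 2 by ring, mul_comm (m ! : K), mul_assoc,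
    mul_div_mul_comm, ascPochhammer_eval_add_one_div_eval_add_half, ascPochhammer_eval_half]
  field_simp

theorem coeff_two_mul_add_one_contiguousProduct_add_half (l m : ℕ) :
    coeff (2 * m + 1) (contiguousProduct (l + 1 : K) (l + 1 / 2)) =
      4 * m.centralBinom * l.centralBinom /
        ((l + (m + 1)).centralBinom *
          (ascPochhammer K (2 * m + 1)).eval (l + 1 / 2 + 1 : K)) := by
  have hm : (m ! : K) ≠ 0 := by exact_mod_cast m.factorial_ne_zero
  rw [coeff_two_mul_add_one_contiguousProduct (natCast_add_half_add_natCast_ne_zero l),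
    show (l + 1 / 2 + 1 - (l + 1) : K) = 1 / 2 by ring, mul_comm (m ! : K), mul_assoc,
    mul_div_mul_comm, ascPochhammer_eval_add_one_div_eval_add_half, ascPochhammer_eval_half,
    pow_succ]
  field_simp

theorem natCast_mul_coeff_contiguousProduct_add_half (l n : ℕ) :
    n * coeff n (contiguousProduct (l + 1 : K) (l + 1 / 2)) =
      (if Even n then (n : K) else n + 1) * n.choose (n / 2) * l.centralBinom /
        ((2 * l + n).choose (l + n / 2) * (ascPochhammer K n).eval (l + 1 / 2 + 1 : K)) := by
  obtain ⟨m, rfl | rfl⟩ := n.even_or_odd'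
  · rw [if_pos (even_two_mul m), coeff_two_mul_contiguousProduct_add_half,
      Nat.mul_div_cancel_left m two_pos, ← mul_add, ← Nat.centralBinom_eq_two_mul_choose,
      ← Nat.centralBinom_eq_two_mul_choose]
    ring
  · have hRec : (m + 1 : K) * (m + 1).centralBinom = 2 * (2 * m + 1) * m.centralBinom := by
      exact_mod_cast Nat.succ_mul_centralBinom_succ m
    have hChoose : (2 * (2 * m + 1).choose m : K) = (m + 1).centralBinom := by
      exact_mod_cast two_mul_choose_two_mul_add_one m
    have hChoose' : (2 * (2 * (l + m) + 1).choose (l + m) : K) = (l + (m + 1)).centralBinom := by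
      exact_mod_cast two_mul_choose_two_mul_add_one (l + m)
    have hNumerator : ((2 * m + 1 : ℕ) * (4 * m.centralBinom * l.centralBinom) : K) =
        2 * (((2 * m + 1 : ℕ) + 1) * (2 * m + 1).choose m * l.centralBinom) := by
      push_cast
      linear_combination l.centralBinom * (-2 * hRec - 2 * (m + 1) * hChoose)
    rw [if_neg (Nat.not_even_two_mul_add_one m), coeff_two_mul_add_one_contiguousProduct_add_half,
      show (2 * m + 1) / 2 = m by omega, ← hChoose', ← add_assoc, ← mul_add, ← mul_div_assoc,
      hNumerator, mul_assoc 2, mul_div_mul_left _ _ two_ne_zero]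

theorem mul_factorial_mul_coeff_contiguousProduct_add_half (l n : ℕ) :
    n * (2 * (l + n) + 1) *
        (n ! / 4 ^ n * coeff n (contiguousProduct (l + 1 : K) (l + 1 / 2))) =
      (2 * l + 1) * l.centralBinom ^ 2 * n.choose (n / 2) /
          ((l + n).choose n * (l + n).centralBinom * (2 * l + n).choose (l + n / 2)) *
        (if Even n then (n : K) else n + 1) := by
  have hne : (2 * (l + n) + 1 : K) ≠ 0 := by norm_cast
  have hn : (n ! : K) ≠ 0 := by exact_mod_cast n.factorial_ne_zero
  have hCoeff := natCast_mul_coeff_contiguousProduct_add_half (K := K) l n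
  rw [ascPochhammer_eval_natCast_add_half_add_one] at hCoeff
  calc
    _ = (2 * (l + n) + 1) * (n ! / 4 ^ n) *
        (n * coeff n (contiguousProduct (l + 1 : K) (l + 1 / 2))) := by ring
    _ = _ := by rw [hCoeff]; field_simp

theorem sum_eq_coeff_contiguousProduct_add_half (l n : ℕ) :
    ∑ k ∈ Finset.range (n + 1), (-1 : K) ^ k * n.choose k * ((2 * l + 1) * l.centralBinom ^ 2) /
        ((2 * (l + k) + 1) * (l + k).centralBinom * (l + (n - k)).centralBinom) =
      n ! / 4 ^ n * coeff n (contiguousProduct (l + 1 : K) (l + 1 / 2)) := by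
  rw [contiguousProduct, coeff_mul, Finset.Nat.sum_antidiagonal_eq_sum_range_succ_mk,
    Finset.mul_sum]
  refine Finset.sum_congr rfl fun k hk => ?_
  have hkn : k ≤ n := Finset.mem_range_succ_iff.mp hk
  rw [coeff_evalNegHom, coeff_kummerSeries_add_half_add_one, coeff_kummerSeries_add_half,
    Nat.cast_choose K hkn, ← pow_mul_pow_sub 4 hkn]
  field_simp

end CentralBinomial

/-- Corollary 11: reciprocal formula of Theorem D. -/
theorem stmt_15 (n lam : ℕ) :
    ∑ k ∈ Finset.range (n + 1),
        (-1 : ℚ) ^ k * (n.choose k : ℚ) *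
          ((n : ℚ) * (1 + 2 * lam) * (1 + 2 * (n : ℚ) + 2 * lam)
            * ((2 * lam).choose lam : ℚ) ^ 2) /
          ((1 + 2 * (k : ℚ) + 2 * lam) * ((2 * k + 2 * lam).choose (k + lam) : ℚ)
            * ((2 * n - 2 * k + 2 * lam).choose (n - k + lam) : ℚ))
      = (1 + 2 * (lam : ℚ)) * ((2 * lam).choose lam : ℚ) ^ 2 * (n.choose (n / 2) : ℚ) /
          (((lam + n).choose n : ℚ) * ((2 * lam + 2 * n).choose (lam + n) : ℚ)
            * ((2 * lam + n).choose (lam + n / 2) : ℚ))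
        * (if Even n then (n : ℚ) else (n : ℚ) + 1) := by
  have hCentral (k : ℕ) : (2 * k + 2 * lam).choose (k + lam) = (lam + k).centralBinom := by
    rw [Nat.centralBinom_eq_two_mul_choose, ← mul_add, add_comm k]
  calc
    _ = (n * (2 * (lam + n) + 1) : ℚ) * ∑ k ∈ Finset.range (n + 1),
        (-1 : ℚ) ^ k * n.choose k * ((2 * lam + 1) * lam.centralBinom ^ 2) /
          ((2 * (lam + k) + 1) * (lam + k).centralBinom * (lam + (n - k)).centralBinom) := by
      rw [Finset.mul_sum]
      refine Finset.sum_congr rfl fun k _ => ?_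
      rw [← Nat.mul_sub, hCentral, hCentral, ← Nat.centralBinom_eq_two_mul_choose]
      ring
    _ = _ := by
      rw [sum_eq_coeff_contiguousProduct_add_half,
        mul_factorial_mul_coeff_contiguousProduct_add_half, ← mul_add 2 lam n,
        ← Nat.centralBinom_eq_two_mul_choose, ← Nat.centralBinom_eq_two_mul_choose]
      ring
end

section
/- For all natural numbers n and λ, the double integral ∫₀¹∫₀¹ (xy)^{λ−1/2} (x−y)^n √((1−y)/(1−x)) dx dy equals (π² · λ! / (2^{1+2n+4λ} · (2+n)_λ)) · binom(2λ, λ) · binom(n, ⌊n/2⌋) · binom(n+2λ, λ+⌊n/2⌋). -/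
/-- Real Pochhammer symbol: `(x)_0 = 1`, `(x)_n = x(x+1)⋯(x+n-1)`. -/
def poch (x : ℝ) (n : ℕ) : ℝ := ∏ i ∈ Finset.range n, (x + i)

/-!
Expanding `(x - y)ⁿ` turns the integral into an alternating binomial convolution of the moments of
two beta densities, which up to powers of `4` are the Catalan numbers `Cₘ` and the central binomial
coefficients `Bₘ`, shifted by `λ`. Swapping the two variables trades this mixed convolution for
`C ⋆ C` when `n` is even (since `Bₘ = (m + 1) Cₘ`) and for `B ⋆ B` when `n` is odd (since
`2 Cₘ = 4 Bₘ - Bₘ₊₁`).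

A sequence with `(m + b) fₘ₊₁ = (c m + a) fₘ` behaves like the moments of a beta density, so
`f ⋆ f` is a discrete two-variable Selberg integral. Discrete integration by parts expresses the
convolution of order `n + 2` through the one of order `n` of the shifted sequence, and iterating
down to order `0` gives a product.
-/

open Finset MeasureTheory ProbabilityTheory Set

section AltBinomConv

variable {R : Type*} [CommRing R]

/-- The alternating binomial convolution `∑ᵢ₊ⱼ₌ₙ (-1)ⁱ (n choose i) fᵢ gⱼ`. If `f` and `g` are the
moment sequences of two measures, this is the integral of `(x - y) ^ n`, where `f` belongs to `y`
and `g` to `x`. -/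
def altBinomConv (f g : ℕ → R) (n : ℕ) : R :=
  ∑ p ∈ antidiagonal n, n.choose p.1 * ((-1) ^ p.1 * f p.1 * g p.2)

lemma altBinomConv_zero (f g : ℕ → R) : altBinomConv f g 0 = f 0 * g 0 := by
  simp [altBinomConv]

lemma altBinomConv_add_left (f₁ f₂ g : ℕ → R) (n : ℕ) :
    altBinomConv (f₁ + f₂) g n = altBinomConv f₁ g n + altBinomConv f₂ g n := by
  simp only [altBinomConv, Pi.add_apply, ← sum_add_distrib]
  exact sum_congr rfl fun _ _ ↦ by ring

lemma altBinomConv_smul_left (c : R) (f g : ℕ → R) (n : ℕ) :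
    altBinomConv (c • f) g n = c * altBinomConv f g n := by
  simp only [altBinomConv, Pi.smul_apply, smul_eq_mul, mul_sum]
  exact sum_congr rfl fun _ _ ↦ by ring

lemma altBinomConv_mul_geom (a b r : R) (f g : ℕ → R) (n : ℕ) :
    altBinomConv (fun m ↦ a * r ^ m * f m) (fun m ↦ b * r ^ m * g m) n
      = a * b * r ^ n * altBinomConv f g n := by
  simp only [altBinomConv, mul_sum]
  refine sum_congr rfl fun p hp ↦ ?_
  rw [← mem_antidiagonal.mp hp, pow_add]
  ring

lemma map_altBinomConv {S : Type*} [CommRing S] (φ : R →+* S) (f g : ℕ → R) (n : ℕ) :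
    φ (altBinomConv f g n) = altBinomConv (φ ∘ f) (φ ∘ g) n := by
  simp [altBinomConv]

lemma altBinomConv_swap (f g : ℕ → R) (n : ℕ) :
    altBinomConv g f n = (-1) ^ n * altBinomConv f g n := by
  rw [altBinomConv, ← Nat.sum_antidiagonal_swap, altBinomConv, mul_sum]
  refine sum_congr rfl fun p hp ↦ ?_
  have hn : p.1 + p.2 = n := mem_antidiagonal.mp hp
  have hsq : ((-1) ^ p.1 * (-1) ^ p.1 : R) = 1 := by rw [← mul_pow]; simp
  rw [Prod.fst_swap, Prod.snd_swap, Nat.choose_symm_of_eq_add (by omega : n = p.2 + p.1), ← hn,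
    pow_add]
  linear_combination -((p.1 + p.2).choose p.1 * (-1) ^ p.2 * f p.1 * g p.2) * hsq

lemma altBinomConv_comm_of_even (f g : ℕ → R) {n : ℕ} (hn : Even n) :
    altBinomConv g f n = altBinomConv f g n := by
  rw [altBinomConv_swap, hn.neg_one_pow, one_mul]

lemma altBinomConv_comm_of_odd (f g : ℕ → R) {n : ℕ} (hn : Odd n) :
    altBinomConv g f n = -altBinomConv f g n := by
  rw [altBinomConv_swap, hn.neg_one_pow, neg_one_mul]

lemma altBinomConv_succ (f g : ℕ → R) (n : ℕ) :
    altBinomConv f g (n + 1)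
      = altBinomConv f (fun m ↦ g (m + 1)) n - altBinomConv (fun m ↦ f (m + 1)) g n := by
  rw [altBinomConv, sum_antidiagonal_choose_succ_mul fun i j ↦ (-1) ^ i * f i * g j,
    sub_eq_add_neg, altBinomConv, altBinomConv, ← sum_neg_distrib]
  congr 1
  refine sum_congr rfl fun p hp ↦ ?_
  rw [Nat.choose_symm_of_eq_add (mem_antidiagonal.mp hp).symm]
  ring

lemma altBinomConv_index_mul_left (f g : ℕ → R) (n : ℕ) :
    altBinomConv (fun m ↦ m * f m) g (n + 1)
      = -((n + 1) * altBinomConv (fun m ↦ f (m + 1)) g n) := by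
  rw [altBinomConv, Nat.sum_antidiagonal_succ, altBinomConv, mul_sum, ← sum_neg_distrib]
  simp only [Nat.cast_zero, zero_mul, mul_zero, zero_add]
  refine sum_congr rfl fun p _ ↦ ?_
  have absorb : ((n + 1) * n.choose p.1 : R) = (n + 1).choose (p.1 + 1) * (p.1 + 1) := by
    exact_mod_cast congrArg (Nat.cast (R := R)) (Nat.add_one_mul_choose_eq n p.1)
  push_cast
  linear_combination (-1) ^ p.1 * f (p.1 + 1) * g p.2 * absorb

lemma altBinomConv_index_mul_add (f g : ℕ → R) (n : ℕ) :
    altBinomConv (fun m ↦ m * f m) g n + altBinomConv f (fun m ↦ m * g m) n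
      = n * altBinomConv f g n := by
  simp only [altBinomConv, ← sum_add_distrib, mul_sum]
  refine sum_congr rfl fun p hp ↦ ?_
  rw [← mem_antidiagonal.mp hp]
  push_cast
  ring

lemma two_mul_altBinomConv_index_mul_self (f : ℕ → R) {n : ℕ} (hn : Even n) :
    2 * altBinomConv (fun m ↦ m * f m) f n = n * altBinomConv f f n := by
  rw [← altBinomConv_index_mul_add, altBinomConv_comm_of_even (fun m ↦ m * f m) f hn, two_mul]

lemma altBinomConv_left_of_recurrence {a b c : R} {f : ℕ → R}
    (hf : ∀ m : ℕ, (m + b) * f (m + 1) = (c * m + a) * f m) (g : ℕ → R) (n : ℕ) :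
    altBinomConv (fun m ↦ m * f (m + 1)) g n + b * altBinomConv (fun m ↦ f (m + 1)) g n
      = c * altBinomConv (fun m ↦ m * f m) g n + a * altBinomConv f g n := by
  have h : (fun m : ℕ ↦ (m : R) * f (m + 1)) + b • (fun m ↦ f (m + 1))
      = c • (fun m : ℕ ↦ (m : R) * f m) + a • f := by
    funext m
    simp only [Pi.add_apply, Pi.smul_apply, smul_eq_mul]
    linear_combination hf m
  simpa only [altBinomConv_add_left, altBinomConv_smul_left] using congrArg (altBinomConv · g n) h

variable [NoZeroDivisors R] [CharZero R]

lemma altBinomConv_self_of_odd (f : ℕ → R) {n : ℕ} (hn : Odd n) : altBinomConv f f n = 0 :=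
  self_eq_neg.mp (altBinomConv_comm_of_odd f f hn)

lemma altBinomConv_index_mul_shift_of_even (f : ℕ → R) {n : ℕ} (hn : Even n) :
    altBinomConv (fun m ↦ m * f m) (fun m ↦ f (m + 1)) n = 0 := by
  cases n with
  | zero => simp [altBinomConv_zero]
  | succ k =>
    have hk : Odd k := by simpa [Nat.even_add_one] using hn
    rw [altBinomConv_index_mul_left, altBinomConv_self_of_odd _ hk, mul_zero, neg_zero]

variable {a b c : R} {f : ℕ → R}

lemma two_mul_altBinomConv_shift_right_of_even
    (hf : ∀ m : ℕ, (m + b) * f (m + 1) = (c * m + a) * f m) {n : ℕ} (hn : Even n) :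
    2 * a * altBinomConv f (fun m ↦ f (m + 1)) n
      = (n + 2 * b) * altBinomConv (fun m ↦ f (m + 1)) (fun m ↦ f (m + 1)) n := by
  have h := altBinomConv_left_of_recurrence hf (fun m ↦ f (m + 1)) n
  rw [altBinomConv_index_mul_shift_of_even f hn] at h
  linear_combination two_mul_altBinomConv_index_mul_self (fun m ↦ f (m + 1)) hn - 2 * h

theorem altBinomConv_self_add_two
    (hf : ∀ m : ℕ, (m + b) * f (m + 1) = (c * m + a) * f m) (n : ℕ) :
    a * (b + n + 1) * altBinomConv f f (n + 2)
      = (n + 1) * (c * n + 2 * (c * b - a)) *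
        altBinomConv (fun m ↦ f (m + 1)) (fun m ↦ f (m + 1)) n := by
  rcases Nat.even_or_odd n with hn | hn
  swap
  · simp [altBinomConv_self_of_odd _ hn, altBinomConv_self_of_odd f (hn.add_even even_two)]
  have mixed := two_mul_altBinomConv_shift_right_of_even hf hn
  set f₁ : ℕ → R := fun m ↦ f (m + 1)
  set f₂ : ℕ → R := fun m ↦ f (m + 2)
  have parts : (n + 1) * altBinomConv f₂ f n
      = b * altBinomConv f₁ f (n + 1) + c * (n + 1) * altBinomConv f₁ f n := by
    have h := altBinomConv_left_of_recurrence hf f (n + 1)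
    rw [altBinomConv_index_mul_left f₁, altBinomConv_index_mul_left,
      altBinomConv_self_of_odd f hn.add_one] at h
    linear_combination -h
  have pascal_outer :
      altBinomConv f f (n + 2) = altBinomConv f f₁ (n + 1) - altBinomConv f₁ f (n + 1) :=
    altBinomConv_succ f f (n + 1)
  have pascal_inner : altBinomConv f f₁ (n + 1) = altBinomConv f f₂ n - altBinomConv f₁ f₁ n :=
    altBinomConv_succ f f₁ n
  rw [altBinomConv_comm_of_even f f₂ hn, altBinomConv_comm_of_odd f f₁ hn.add_one,
    altBinomConv_comm_of_even f f₁ hn] at parts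
  rw [altBinomConv_comm_of_odd f f₁ hn.add_one] at pascal_outer
  have halved : (b + n + 1) * altBinomConv f f₁ (n + 1)
      = (n + 1) * (c * altBinomConv f f₁ n - altBinomConv f₁ f₁ n) := by
    linear_combination (n + 1) * pascal_inner + parts
  linear_combination a * (b + n + 1) * pascal_outer + 2 * a * halved + c * (n + 1) * mixed

end AltBinomConv

section CatalanConvolution

open Nat (centralBinom)

lemma add_two_choose_mul (n l : ℕ) :
    (n + l + 2).choose l * ((n + 1) * (n + 2))
      = (n + l + 1).choose (l + 1) * ((l + 1) * (n + l + 2)) := by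
  have absorb_top : (n + l + 2).choose l * (n + 2) = (n + l + 1).choose l * (n + l + 2) := by
    rw [Nat.choose_mul_succ_eq, show n + l + 1 + 1 - l = n + 2 by omega]
  have absorb_bottom : (n + l + 1).choose l * (n + 1) = (n + l + 1).choose (l + 1) * (l + 1) := by
    rw [Nat.choose_succ_right_eq, show n + l + 1 - l = n + 1 by omega]
  calc (n + l + 2).choose l * ((n + 1) * (n + 2))
    _ = (n + l + 2).choose l * (n + 2) * (n + 1) := by ring
    _ = (n + l + 1).choose l * (n + 1) * (n + l + 2) := by rw [absorb_top]; ring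
    _ = (n + l + 1).choose (l + 1) * ((l + 1) * (n + l + 2)) := by rw [absorb_bottom]; ring

lemma centralBinom_succ_eq_two_mul_choose (m : ℕ) :
    centralBinom (m + 1) = 2 * (2 * m + 1).choose m := by
  have symm : (2 * m + 1).choose (m + 1) = (2 * m + 1).choose m :=
    Nat.choose_symm_of_eq_add (by omega)
  rw [Nat.centralBinom_eq_two_mul_choose, show 2 * (m + 1) = 2 * m + 1 + 1 by ring,
    Nat.choose_succ_succ, symm, ← two_mul]

lemma add_two_mul_catalan_succ (m : ℕ) :
    (m + 2) * catalan (m + 1) = 2 * (2 * m + 1) * catalan m := by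
  refine Nat.eq_of_mul_eq_mul_left m.succ_pos ?_
  calc (m + 1) * ((m + 2) * catalan (m + 1))
    _ = (m + 1) * centralBinom (m + 1) := by rw [← succ_mul_catalan_eq_centralBinom (m + 1)]
    _ = 2 * (2 * m + 1) * centralBinom m := Nat.succ_mul_centralBinom_succ m
    _ = (m + 1) * (2 * (2 * m + 1) * catalan m) := by
      rw [← succ_mul_catalan_eq_centralBinom m]; ring

lemma two_mul_catalan_add_centralBinom_succ (m : ℕ) :
    2 * catalan m + centralBinom (m + 1) = 4 * centralBinom m := by
  refine Nat.eq_of_mul_eq_mul_left m.succ_pos ?_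
  calc (m + 1) * (2 * catalan m + centralBinom (m + 1))
    _ = 2 * ((m + 1) * catalan m) + (m + 1) * centralBinom (m + 1) := by ring
    _ = (m + 1) * (4 * centralBinom m) := by
      rw [succ_mul_catalan_eq_centralBinom, Nat.succ_mul_centralBinom_succ]; ring

section Cast

variable (R : Type*) [CommSemiring R] (m : ℕ)

lemma cast_succ_mul_centralBinom_succ :
    ((m : R) + 1) * centralBinom (m + 1) = 2 * (2 * m + 1) * centralBinom m :=
  mod_cast congrArg (Nat.cast (R := R)) (Nat.succ_mul_centralBinom_succ m)

lemma cast_add_two_mul_catalan_succ :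
    ((m : R) + 2) * catalan (m + 1) = 2 * (2 * m + 1) * catalan m :=
  mod_cast congrArg (Nat.cast (R := R)) (add_two_mul_catalan_succ m)

lemma cast_succ_mul_catalan_eq_centralBinom :
    ((m : R) + 1) * catalan m = centralBinom m :=
  mod_cast congrArg (Nat.cast (R := R)) (succ_mul_catalan_eq_centralBinom m)

end Cast

/-- The sequence of central binomial coefficients starting at index `l`, with integer values so
that it can enter an alternating convolution. -/
abbrev centralBinomFrom (l : ℕ) : ℕ → ℤ := fun k ↦ centralBinom (k + l)

/-- The sequence of Catalan numbers starting at index `l`, with integer values so that it can enter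
an alternating convolution. -/
abbrev catalanFrom (l : ℕ) : ℕ → ℤ := fun k ↦ catalan (k + l)

lemma shift_centralBinomFrom (l : ℕ) :
    (fun k ↦ centralBinomFrom l (k + 1)) = centralBinomFrom (l + 1) := by
  simp only [centralBinomFrom, add_right_comm, add_assoc]

lemma shift_catalanFrom (l : ℕ) : (fun k ↦ catalanFrom l (k + 1)) = catalanFrom (l + 1) := by
  simp only [catalanFrom, add_right_comm, add_assoc]

lemma altBinomConv_centralBinomFrom_add_two (n l : ℕ) :
    (2 * l + 1) * (n + l + 2) * altBinomConv (centralBinomFrom l) (centralBinomFrom l) (n + 2)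
      = 2 * (n + 1) ^ 2 *
        altBinomConv (centralBinomFrom (l + 1)) (centralBinomFrom (l + 1)) n := by
  have moment_rec (k : ℕ) : ((k : ℤ) + (l + 1)) * centralBinomFrom l (k + 1)
      = (4 * k + (4 * l + 2)) * centralBinomFrom l k := by
    rw [centralBinomFrom, add_right_comm]
    have h := cast_succ_mul_centralBinom_succ ℤ (k + l)
    push_cast at h
    linear_combination h
  have h := altBinomConv_self_add_two moment_rec n
  rw [shift_centralBinomFrom] at h
  refine mul_left_cancel₀ (two_ne_zero (α := ℤ)) ?_
  linear_combination h

lemma altBinomConv_catalanFrom_add_two (n l : ℕ) :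
    (2 * l + 1) * (n + l + 3) * altBinomConv (catalanFrom l) (catalanFrom l) (n + 2)
      = 2 * (n + 1) * (n + 3) * altBinomConv (catalanFrom (l + 1)) (catalanFrom (l + 1)) n := by
  have moment_rec (k : ℕ) : ((k : ℤ) + (l + 2)) * catalanFrom l (k + 1)
      = (4 * k + (4 * l + 2)) * catalanFrom l k := by
    rw [catalanFrom, add_right_comm]
    have h := cast_add_two_mul_catalan_succ ℤ (k + l)
    push_cast at h
    linear_combination h
  have h := altBinomConv_self_add_two moment_rec n
  rw [shift_catalanFrom] at h
  refine mul_left_cancel₀ (two_ne_zero (α := ℤ)) ?_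
  linear_combination h

theorem choose_mul_altBinomConv_centralBinomFrom (m l : ℕ) :
    (2 * m + l).choose l * altBinomConv (centralBinomFrom l) (centralBinomFrom l) (2 * m)
      = centralBinom l * centralBinom m * centralBinom (m + l) := by
  induction m generalizing l with
  | zero => simp [altBinomConv_zero, centralBinomFrom]
  | succ m ih =>
    have step := altBinomConv_centralBinomFrom_add_two (2 * m) l
    have ih_succ := ih (l + 1)
    have choose_step : ((2 * m + l + 2).choose l : ℤ) * ((2 * m + 1) * (2 * m + 2))
        = (2 * m + l + 1).choose (l + 1) * ((l + 1) * (2 * m + l + 2)) :=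
      mod_cast add_two_choose_mul (2 * m) l
    have rec_l := cast_succ_mul_centralBinom_succ ℤ l
    have rec_m := cast_succ_mul_centralBinom_succ ℤ m
    rw [show 2 * (m + 1) + l = 2 * m + l + 2 by ring, show m + 1 + l = m + (l + 1) by ring]
    rw [show 2 * m + (l + 1) = 2 * m + l + 1 by ring] at ih_succ
    have factor_ne_zero : ((2 * m + 1) * (2 * m + 2) * (2 * l + 1) : ℤ) ≠ 0 := by positivity
    refine mul_left_cancel₀ factor_ne_zero ?_
    push_cast at step
    linear_combination
      (2 * l + 1) * altBinomConv (centralBinomFrom l) (centralBinomFrom l) (2 * m + 2) * choose_step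
      + (2 * m + l + 1).choose (l + 1) * (l + 1) * step
      + 2 * (l + 1) * (2 * m + 1) ^ 2 * ih_succ
      + 2 * (2 * m + 1) ^ 2 * centralBinom m * centralBinom (m + (l + 1)) * rec_l
      - 2 * (2 * m + 1) * (2 * l + 1) * centralBinom l * centralBinom (m + (l + 1)) * rec_m

theorem choose_mul_altBinomConv_catalanFrom (m l : ℕ) :
    (2 * m + 1 + l).choose l * altBinomConv (catalanFrom l) (catalanFrom l) (2 * m)
      = centralBinom l * centralBinom m * catalan (m + l) := by
  induction m generalizing l with
  | zero =>
    simp [altBinomConv_zero, catalanFrom, ← cast_succ_mul_catalan_eq_centralBinom, add_comm 1 l,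
      mul_assoc]
  | succ m ih =>
    have step := altBinomConv_catalanFrom_add_two (2 * m) l
    have ih_succ := ih (l + 1)
    have choose_step : ((2 * m + 1 + l + 2).choose l : ℤ) * ((2 * m + 2) * (2 * m + 3))
        = (2 * m + 1 + l + 1).choose (l + 1) * ((l + 1) * (2 * m + l + 3)) := by
      have h := congrArg (Nat.cast (R := ℤ)) (add_two_choose_mul (2 * m + 1) l)
      push_cast at h
      linear_combination h
    have rec_l := cast_succ_mul_centralBinom_succ ℤ l
    have rec_m := cast_succ_mul_centralBinom_succ ℤ m
    rw [show 2 * (m + 1) + 1 + l = 2 * m + 1 + l + 2 by ring, show m + 1 + l = m + (l + 1) by ring]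
    rw [← add_assoc (2 * m + 1) l 1] at ih_succ
    have factor_ne_zero : ((2 * m + 2) * (2 * m + 3) * (2 * l + 1) : ℤ) ≠ 0 := by positivity
    refine mul_left_cancel₀ factor_ne_zero ?_
    push_cast at step
    linear_combination
      (2 * l + 1) * altBinomConv (catalanFrom l) (catalanFrom l) (2 * m + 2) * choose_step
      + (2 * m + 1 + l + 1).choose (l + 1) * (l + 1) * step
      + 2 * (l + 1) * (2 * m + 1) * (2 * m + 3) * ih_succ
      + 2 * (2 * m + 1) * (2 * m + 3) * centralBinom m * catalan (m + (l + 1)) * rec_l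
      - 2 * (2 * m + 3) * (2 * l + 1) * centralBinom l * catalan (m + (l + 1)) * rec_m

lemma altBinomConv_catalanFrom_centralBinomFrom_even (m l : ℕ) :
    altBinomConv (catalanFrom l) (centralBinomFrom l) (2 * m)
      = (m + l + 1) * altBinomConv (catalanFrom l) (catalanFrom l) (2 * m) := by
  have hB : centralBinomFrom l
      = (fun k : ℕ ↦ k * catalanFrom l k) + (l + 1 : ℤ) • catalanFrom l := by
    funext k
    simp only [Pi.add_apply, Pi.smul_apply, smul_eq_mul, centralBinomFrom, catalanFrom,
      ← cast_succ_mul_catalan_eq_centralBinom]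
    push_cast
    ring
  have hm : Even (2 * m) := even_two_mul m
  have h := two_mul_altBinomConv_index_mul_self (catalanFrom l) hm
  refine mul_left_cancel₀ (two_ne_zero (α := ℤ)) ?_
  rw [altBinomConv_comm_of_even _ _ hm, hB, altBinomConv_add_left, altBinomConv_smul_left]
  push_cast at h
  linear_combination h

lemma altBinomConv_catalanFrom_centralBinomFrom_odd (m l : ℕ) :
    4 * altBinomConv (catalanFrom l) (centralBinomFrom l) (2 * m + 1)
      = altBinomConv (centralBinomFrom l) (centralBinomFrom l) (2 * m + 2) := by
  have hC : (2 : ℤ) • catalanFrom l + centralBinomFrom (l + 1) = (4 : ℤ) • centralBinomFrom l := by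
    funext k
    simp only [Pi.add_apply, Pi.smul_apply, smul_eq_mul]
    exact_mod_cast two_mul_catalan_add_centralBinom_succ (k + l)
  have hm : Odd (2 * m + 1) := odd_two_mul_add_one m
  have h := congrArg (altBinomConv · (centralBinomFrom l) (2 * m + 1)) hC
  simp only [altBinomConv_add_left, altBinomConv_smul_left, altBinomConv_self_of_odd _ hm] at h
  rw [altBinomConv_succ _ _ (2 * m + 1), shift_centralBinomFrom,
    altBinomConv_comm_of_odd (centralBinomFrom (l + 1)) _ hm]
  linear_combination 2 * h

theorem choose_mul_altBinomConv_catalanFrom_centralBinomFrom (n l : ℕ) :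
    (n + 1 + l).choose l * altBinomConv (catalanFrom l) (centralBinomFrom l) n
      = centralBinom l * n.choose (n / 2) * (n + 2 * l).choose (l + n / 2) := by
  obtain ⟨m, rfl | rfl⟩ := n.even_or_odd'
  · have closed := choose_mul_altBinomConv_catalanFrom m l
    have hB := cast_succ_mul_catalan_eq_centralBinom ℤ (m + l)
    push_cast at hB
    rw [show 2 * m / 2 = m by omega, show 2 * m + 2 * l = 2 * (m + l) by ring, add_comm l m,
      ← Nat.centralBinom_eq_two_mul_choose, ← Nat.centralBinom_eq_two_mul_choose,
      altBinomConv_catalanFrom_centralBinomFrom_even]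
    linear_combination (m + l + 1) * closed + centralBinom l * centralBinom m * hB
  · have closed := choose_mul_altBinomConv_centralBinomFrom (m + 1) l
    have odd := altBinomConv_catalanFrom_centralBinomFrom_odd m l
    rw [show m + 1 + l = m + l + 1 by ring, centralBinom_succ_eq_two_mul_choose,
      centralBinom_succ_eq_two_mul_choose, mul_add_one 2 m, ← odd] at closed
    push_cast at closed
    rw [show (2 * m + 1) / 2 = m by omega, show 2 * m + 1 + 2 * l = 2 * (m + l) + 1 by ring,
      add_comm l m]
    refine mul_left_cancel₀ (four_ne_zero (α := ℤ)) ?_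
    linear_combination closed

end CatalanConvolution

section BetaMoments

open Nat (centralBinom)

lemma ofReal_betaIntegrand {x : ℝ} (hx : x ∈ Ioo (0 : ℝ) 1) (a b : ℝ) :
    ((x ^ (a - 1) * (1 - x) ^ (b - 1) : ℝ) : ℂ)
      = (x : ℂ) ^ ((a : ℂ) - 1) * (1 - (x : ℂ)) ^ ((b : ℂ) - 1) := by
  push_cast [Complex.ofReal_cpow hx.1.le, Complex.ofReal_cpow (sub_nonneg.mpr hx.2.le)]
  rfl

variable {a b : ℝ}

lemma integrableOn_rpow_mul_one_sub_rpow (ha : 0 < a) (hb : 0 < b) :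
    IntegrableOn (fun x : ℝ ↦ x ^ (a - 1) * (1 - x) ^ (b - 1)) (Ioo 0 1) := by
  have h := Complex.betaIntegral_convergent (u := a) (v := b) (by simpa) (by simpa)
  rw [intervalIntegrable_iff_integrableOn_Ioo_of_le zero_le_one] at h
  refine IntegrableOn.congr_fun h.re (fun x hx ↦ ?_) measurableSet_Ioo
  rw [← ofReal_betaIntegrand hx, RCLike.re_eq_complex_re, Complex.ofReal_re]

lemma setIntegral_rpow_mul_one_sub_rpow (ha : 0 < a) (hb : 0 < b) :
    ∫ x in Ioo (0 : ℝ) 1, x ^ (a - 1) * (1 - x) ^ (b - 1) = beta a b := by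
  rw [beta_eq_betaIntegralReal a b ha hb, Complex.betaIntegral,
    intervalIntegral.integral_of_le zero_le_one, integral_Ioc_eq_integral_Ioo,
    ← setIntegral_congr_fun measurableSet_Ioo fun x hx ↦ ofReal_betaIntegrand hx a b,
    integral_complex_ofReal, Complex.ofReal_re]

lemma pow_mul_rpow_mul_one_sub_rpow_eqOn (a b : ℝ) (k : ℕ) :
    EqOn (fun x : ℝ ↦ x ^ (k + a - 1) * (1 - x) ^ (b - 1))
      (fun x ↦ x ^ k * (x ^ (a - 1) * (1 - x) ^ (b - 1))) (Ioo 0 1) := by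
  intro x hx
  simp only [add_sub_assoc, Real.rpow_add hx.1, Real.rpow_natCast, mul_assoc]

lemma integrableOn_pow_mul_rpow_mul_one_sub_rpow (ha : 0 < a) (hb : 0 < b) (k : ℕ) :
    IntegrableOn (fun x : ℝ ↦ x ^ k * (x ^ (a - 1) * (1 - x) ^ (b - 1))) (Ioo 0 1) :=
  (integrableOn_rpow_mul_one_sub_rpow (by positivity) hb).congr_fun
    (pow_mul_rpow_mul_one_sub_rpow_eqOn a b k) measurableSet_Ioo

lemma setIntegral_pow_mul_rpow_mul_one_sub_rpow (ha : 0 < a) (hb : 0 < b) (k : ℕ) :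
    ∫ x in Ioo (0 : ℝ) 1, x ^ k * (x ^ (a - 1) * (1 - x) ^ (b - 1)) = beta (k + a) b := by
  rw [← setIntegral_congr_fun measurableSet_Ioo (pow_mul_rpow_mul_one_sub_rpow_eqOn a b k),
    setIntegral_rpow_mul_one_sub_rpow (by positivity) hb]

lemma Gamma_nat_add_half_eq_centralBinom (m : ℕ) :
    Real.Gamma (m + 1 / 2) = √Real.pi * m.factorial * centralBinom m / 4 ^ m := by
  induction m with
  | zero => simpa using Real.Gamma_one_half_eq
  | succ m ih =>
    have h := cast_succ_mul_centralBinom_succ ℝ m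
    rw [Nat.cast_succ, add_right_comm, Real.Gamma_add_one (by positivity), ih, Nat.factorial_succ]
    push_cast
    rw [pow_succ]
    field_simp
    linear_combination -2 * h

lemma beta_nat_add_half_one_half (m : ℕ) :
    beta (m + 1 / 2) (1 / 2) = Real.pi * centralBinom m / 4 ^ m := by
  rw [beta, Gamma_nat_add_half_eq_centralBinom, Real.Gamma_one_half_eq, add_assoc, add_halves,
    Real.Gamma_nat_eq_factorial]
  field_simp
  rw [Real.sq_sqrt Real.pi_pos.le, mul_comm]

lemma beta_nat_add_half_three_halves (m : ℕ) :
    beta (m + 1 / 2) (3 / 2) = Real.pi * catalan m / (2 * 4 ^ m) := by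
  have hΓ : Real.Gamma (3 / 2) = √Real.pi / 2 := by
    rw [show (3 / 2 : ℝ) = 1 / 2 + 1 by norm_num, Real.Gamma_add_one (by norm_num),
      Real.Gamma_one_half_eq]
    ring
  rw [beta, Gamma_nat_add_half_eq_centralBinom, hΓ,
    show (m : ℝ) + 1 / 2 + 3 / 2 = (m + 1 : ℕ) + 1 by push_cast; ring,
    Real.Gamma_nat_eq_factorial, Nat.factorial_succ, ← cast_succ_mul_catalan_eq_centralBinom]
  push_cast
  field_simp
  rw [Real.sq_sqrt Real.pi_pos.le, mul_comm]

end BetaMoments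

section DoubleIntegral

theorem integral_integral_sub_pow_mul {μ ν : Measure ℝ} {u v : ℝ → ℝ}
    (hu : ∀ k : ℕ, Integrable (fun x ↦ x ^ k * u x) μ)
    (hv : ∀ k : ℕ, Integrable (fun y ↦ y ^ k * v y) ν) (n : ℕ) :
    ∫ x, ∫ y, (x - y) ^ n * (u x * v y) ∂ν ∂μ
      = altBinomConv (fun k ↦ ∫ y, y ^ k * v y ∂ν) (fun k ↦ ∫ x, x ^ k * u x ∂μ) n := by
  have expand (x y : ℝ) : (x - y) ^ n * (u x * v y)
      = ∑ p ∈ antidiagonal n, (n.choose p.1 * (-1) ^ p.1 * (x ^ p.2 * u x)) * (y ^ p.1 * v y) := by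
    rw [sub_eq_neg_add, (Commute.all (-y) x).add_pow', sum_mul]
    refine sum_congr rfl fun p _ ↦ ?_
    rw [nsmul_eq_mul, neg_pow]
    ring
  have inner (x : ℝ) : ∫ y, (x - y) ^ n * (u x * v y) ∂ν
      = ∑ p ∈ antidiagonal n,
          (n.choose p.1 * (-1) ^ p.1 * ∫ y, y ^ p.1 * v y ∂ν) * (x ^ p.2 * u x) := by
    simp only [expand]
    rw [integral_finsetSum _ fun p _ ↦ (hv p.1).const_mul _]
    refine sum_congr rfl fun p _ ↦ ?_
    rw [integral_const_mul]
    ring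
  simp only [inner]
  rw [integral_finsetSum _ fun p _ ↦ (hu p.2).const_mul _, altBinomConv]
  refine sum_congr rfl fun p _ ↦ ?_
  rw [integral_const_mul]
  ring

lemma mul_rpow_mul_sub_pow_mul_sqrt_div {x y : ℝ} (hx : x ∈ Ioo (0 : ℝ) 1)
    (hy : y ∈ Ioo (0 : ℝ) 1) (s : ℝ) (n : ℕ) :
    (x * y) ^ s * (x - y) ^ n * √((1 - y) / (1 - x))
      = (x - y) ^ n *
        (x ^ s * (1 - x) ^ (1 / 2 - 1 : ℝ) * (y ^ s * (1 - y) ^ (3 / 2 - 1 : ℝ))) := by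
  have hx' : 0 ≤ 1 - x := sub_nonneg.mpr hx.2.le
  have hy' : 0 ≤ 1 - y := sub_nonneg.mpr hy.2.le
  rw [Real.mul_rpow hx.1.le hy.1.le, Real.sqrt_div hy', Real.sqrt_eq_rpow, Real.sqrt_eq_rpow,
    show (1 / 2 - 1 : ℝ) = -(1 / 2) by norm_num, show (3 / 2 - 1 : ℝ) = 1 / 2 by norm_num,
    Real.rpow_neg hx']
  ring

theorem integral_eq_altBinomConv (n l : ℕ) :
    ∫ x in (0 : ℝ)..1, ∫ y in (0 : ℝ)..1,
        (x * y) ^ ((l : ℝ) - 1 / 2) * (x - y) ^ n * √((1 - y) / (1 - x))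
      = Real.pi ^ 2 / 2 ^ (1 + 2 * n + 4 * l) *
        (altBinomConv (catalanFrom l) (centralBinomFrom l) n : ℤ) := by
  have hl : (0 : ℝ) < l + 1 / 2 := by positivity
  have x_moment (k : ℕ) :
      ∫ x in Ioo (0 : ℝ) 1, x ^ k * (x ^ ((l : ℝ) + 1 / 2 - 1) * (1 - x) ^ (1 / 2 - 1 : ℝ))
        = Real.pi / 4 ^ l * (1 / 4) ^ k * (centralBinomFrom l k : ℤ) := by
    rw [setIntegral_pow_mul_rpow_mul_one_sub_rpow hl one_half_pos, ← add_assoc, ← Nat.cast_add,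
      beta_nat_add_half_one_half, pow_add, one_div_pow, Int.cast_natCast]
    field_simp
  have y_moment (k : ℕ) :
      ∫ y in Ioo (0 : ℝ) 1, y ^ k * (y ^ ((l : ℝ) + 1 / 2 - 1) * (1 - y) ^ (3 / 2 - 1 : ℝ))
        = Real.pi / (2 * 4 ^ l) * (1 / 4) ^ k * (catalanFrom l k : ℤ) := by
    rw [setIntegral_pow_mul_rpow_mul_one_sub_rpow hl (by norm_num), ← add_assoc, ← Nat.cast_add,
      beta_nat_add_half_three_halves, pow_add, one_div_pow, Int.cast_natCast]
    field_simp
  have hexp : (l : ℝ) - 1 / 2 = l + 1 / 2 - 1 := by ring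
  simp only [intervalIntegral.integral_of_le zero_le_one, integral_Ioc_eq_integral_Ioo, hexp]
  rw [setIntegral_congr_fun measurableSet_Ioo fun x hx ↦
      setIntegral_congr_fun measurableSet_Ioo fun y hy ↦
        mul_rpow_mul_sub_pow_mul_sqrt_div hx hy (l + 1 / 2 - 1) n,
    integral_integral_sub_pow_mul (integrableOn_pow_mul_rpow_mul_one_sub_rpow hl one_half_pos)
      (integrableOn_pow_mul_rpow_mul_one_sub_rpow hl (by norm_num))]
  simp only [x_moment, y_moment]
  have hpow : (2 : ℝ) ^ (1 + 2 * n + 4 * l) = 2 * 4 ^ l * 4 ^ l * 4 ^ n := by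
    rw [show 1 + 2 * n + 4 * l = 1 + 2 * (l + l + n) by ring, pow_add, pow_mul, pow_one, pow_add,
      pow_add]
    norm_num
    ring
  have map_cast := map_altBinomConv (Int.castRingHom ℝ) (catalanFrom l) (centralBinomFrom l) n
  simp only [Function.comp_def, eq_intCast] at map_cast
  rw [altBinomConv_mul_geom, map_cast, hpow, one_div_pow]
  field_simp

end DoubleIntegral

lemma poch_natCast (n k : ℕ) : poch n k = n.ascFactorial k := by
  rw [poch, Nat.ascFactorial_eq_prod_range]
  push_cast
  rfl

/-- Corollary 13: integral formula equivalent to Theorem B. -/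
theorem stmt_17 (n lam : ℕ) :
    ∫ x in (0 : ℝ)..1, ∫ y in (0 : ℝ)..1,
        (x * y) ^ ((lam : ℝ) - 1 / 2) * (x - y) ^ n * Real.sqrt ((1 - y) / (1 - x))
      = (Real.pi ^ 2 * (lam.factorial : ℝ) /
            ((2 : ℝ) ^ (1 + 2 * n + 4 * lam) * poch (2 + (n : ℝ)) lam))
          * ((2 * lam).choose lam : ℝ) * (n.choose (n / 2) : ℝ)
          * ((n + 2 * lam).choose (lam + n / 2) : ℝ) := by
  have hpoch : poch (2 + n) lam = lam.factorial * (n + 1 + lam).choose lam := by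
    rw [show (2 + n : ℝ) = (n + 1 + 1 : ℕ) by push_cast; ring, poch_natCast,
      Nat.ascFactorial_eq_factorial_mul_choose, Nat.cast_mul]
  have hconv : ((n + 1 + lam).choose lam : ℝ) *
        (altBinomConv (catalanFrom lam) (centralBinomFrom lam) n : ℤ)
      = (2 * lam).choose lam * n.choose (n / 2) * (n + 2 * lam).choose (lam + n / 2) := by
    rw [← Nat.centralBinom_eq_two_mul_choose]
    exact_mod_cast choose_mul_altBinomConv_catalanFrom_centralBinomFrom n lam
  have choose_ne_zero : ((n + 1 + lam).choose lam : ℝ) ≠ 0 :=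
    mod_cast (Nat.choose_pos (Nat.le_add_left lam (n + 1))).ne'
  rw [integral_eq_altBinomConv, hpoch]
  field_simp
  linear_combination hconv
end
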